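/- Let n ≥ 1 and let A ⊆ {1, ..., n} be a 3-AP-free set. Then the set B = {a₁ + 10n·a₂ : a₁, a₂ ∈ A} is a 3-AP-free subset of {1, ..., 100n²} of cardinality |A|². Consequently, r₃(100n²) ≥ r₃(n)². -/

import Mathlib

/-- `r3 m` is the maximum cardinality of a 3-AP-free subset of `{1, ..., m}`. -/
noncomputable def r3 (m : ℕ) : ℕ :=
  sSup {k : ℕ | ∃ A : Finset ℤ, A ⊆ Finset.Icc 1 (m : ℤ) ∧ ThreeAPFree (A : Set ℤ) ∧ A.card = k}

theorem aux_digit (n x y : ℤ) (h1 : -(10 * n) < x) (h2 : x < 10 * n)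
    (h : x + 10 * n * y = 0) : x = 0 ∧ y = 0 := by
  have hy : y = 0 := by
    rcases lt_trichotomy y 0 with hy | hy | hy
    · nlinarith
    · exact hy
    · nlinarith
  subst hy
  constructor <;> linarith

theorem aux_main (n : ℕ) (hn : 1 ≤ n) (A : Finset ℤ)
    (hA : A ⊆ Finset.Icc 1 (n : ℤ)) (hAP : ThreeAPFree (A : Set ℤ)) :
    ((A ×ˢ A).image (fun p => p.1 + 10 * (n : ℤ) * p.2) ⊆ Finset.Icc 1 (100 * (n : ℤ) ^ 2)) ∧
    ThreeAPFree (((A ×ˢ A).image (fun p => p.1 + 10 * (n : ℤ) * p.2) : Finset ℤ) : Set ℤ) ∧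
    ((A ×ˢ A).image (fun p => p.1 + 10 * (n : ℤ) * p.2)).card = A.card ^ 2 := by
  have hn' : (1 : ℤ) ≤ n := by exact_mod_cast hn
  have hb : ∀ a ∈ A, 1 ≤ a ∧ a ≤ (n : ℤ) := fun a ha => Finset.mem_Icc.1 (hA ha)
  refine ⟨?_, ?_, ?_⟩
  · intro z hz
    obtain ⟨⟨a, b⟩, hab, rfl⟩ := Finset.mem_image.1 hz
    obtain ⟨ha, hb'⟩ := Finset.mem_product.1 hab
    have h1 := hb a ha
    have h2 := hb b hb'
    simp only [Finset.mem_Icc]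
    constructor <;> nlinarith [h1.1, h1.2, h2.1, h2.2]
  · intro x hx y hy z hz h
    obtain ⟨⟨a, a'⟩, kx, rfl⟩ := Finset.mem_image.1 (Finset.mem_coe.1 hx)
    obtain ⟨⟨b, b'⟩, ky, rfl⟩ := Finset.mem_image.1 (Finset.mem_coe.1 hy)
    obtain ⟨⟨c, c'⟩, kz, rfl⟩ := Finset.mem_image.1 (Finset.mem_coe.1 hz)
    obtain ⟨ha, ha'⟩ := Finset.mem_product.1 kx
    obtain ⟨hb1, hb1'⟩ := Finset.mem_product.1 ky
    obtain ⟨hc, hc'⟩ := Finset.mem_product.1 kz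
    dsimp only at *
    have h1 := hb a ha
    have h2 := hb b hb1
    have h3 := hb c hc
    obtain ⟨e1, e2⟩ := aux_digit n (a + c - b - b) (a' + c' - b' - b')
      (by linarith [h1.1, h1.2, h2.1, h2.2, h3.1, h3.2])
      (by linarith [h1.1, h1.2, h2.1, h2.2, h3.1, h3.2]) (by linarith)
    have f1 : a = b := hAP ha hb1 hc (by linarith)
    have f2 : a' = b' := hAP ha' hb1' hc' (by linarith)
    rw [f1, f2]
  · rw [Finset.card_image_of_injOn, Finset.card_product, sq]
    rintro ⟨a, a'⟩ hx ⟨b, b'⟩ hy h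
    obtain ⟨ha, ha'⟩ := Finset.mem_product.1 (Finset.mem_coe.1 hx)
    obtain ⟨hb1, hb1'⟩ := Finset.mem_product.1 (Finset.mem_coe.1 hy)
    dsimp only at *
    have h1 := hb a ha
    have h2 := hb b hb1
    obtain ⟨e1, e2⟩ := aux_digit n (a - b) (a' - b')
      (by linarith [h1.1, h1.2, h2.1, h2.2])
      (by linarith [h1.1, h1.2, h2.1, h2.2]) (by linarith)
    exact Prod.ext (by dsimp only; linarith) (by dsimp only; linarith)

theorem aux_bdd (m : ℕ) : BddAbove {k : ℕ | ∃ A : Finset ℤ, A ⊆ Finset.Icc 1 (m : ℤ) ∧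
    ThreeAPFree (A : Set ℤ) ∧ A.card = k} := by
  refine ⟨(Finset.Icc 1 (m : ℤ)).card, ?_⟩
  rintro k ⟨A, hA, -, rfl⟩
  exact Finset.card_le_card hA

theorem stmt_17 (n : ℕ) (hn : 1 ≤ n) (A : Finset ℤ)
    (hA : A ⊆ Finset.Icc 1 (n : ℤ)) (hAP : ThreeAPFree (A : Set ℤ)) :
    ((A ×ˢ A).image (fun p => p.1 + 10 * (n : ℤ) * p.2) ⊆ Finset.Icc 1 (100 * (n : ℤ) ^ 2)) ∧
    ThreeAPFree (((A ×ˢ A).image (fun p => p.1 + 10 * (n : ℤ) * p.2) : Finset ℤ) : Set ℤ) ∧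
    ((A ×ˢ A).image (fun p => p.1 + 10 * (n : ℤ) * p.2)).card = A.card ^ 2 ∧
    r3 n ^ 2 ≤ r3 (100 * n ^ 2) := by
  obtain ⟨h1, h2, h3⟩ := aux_main n hn A hA hAP
  refine ⟨h1, h2, h3, ?_⟩
  obtain ⟨C, hC, hC2, hC3⟩ := Nat.sSup_mem (s := {k : ℕ | ∃ A : Finset ℤ,
    A ⊆ Finset.Icc 1 (n : ℤ) ∧ ThreeAPFree (A : Set ℤ) ∧ A.card = k})
    ⟨_, A, hA, hAP, rfl⟩ (aux_bdd n)
  obtain ⟨g1, g2, g3⟩ := aux_main n hn C hC hC2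
  have e : r3 n = C.card := hC3.symm
  rw [e, ← g3]
  refine le_csSup (aux_bdd _) ⟨_, ?_, g2, rfl⟩
  push_cast
  exact g1
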